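/- There is a k-vector space isomorphism {h ∈ R^n : Σ_{i=1}^n h_i X_i ∈ fR} / (T + f·R^n + R·(f_1,…,f_n)) ≅ (I_n : f)/(I_n + (c)) ⊕ (I_{n−1} : X_n)/((I_{n−1} : X_n) ∩ (I_{n−1} + (f, f_n))). (The left-hand side is the first homology H_1(Ω^*_{V,0}, X) of the complex of Kähler forms on V = {f = 0} contracted with the vector field X.) -/

import Mathlib

/-- The linear map `(h₁, …, hₙ) ↦ ∑ hᵢ Xᵢ`. -/
noncomputable def sumMul {R : Type*} [CommRing R] {n : ℕ} (X : Fin n → R) :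
    (Fin n → R) →ₗ[R] R where
  toFun h := ∑ i, h i * X i
  map_add' h g := by simp [add_mul, Finset.sum_add_distrib]
  map_smul' r h := by simp [Finset.mul_sum, mul_assoc]

/-!
Let `A = {h : ∑ hᵢ Xᵢ ∈ fR}`, let `D ≤ A` be the submodule of relations, and let `Z` be the kernel
of the contraction `h ↦ ∑ hᵢ Xᵢ`. Contraction gives a short exact sequence
`0 → Z / (Z ∩ D) → A / D → fR ∩ Iₙ / f (Iₙ + (c)) → 0`, which splits over a field.

Multiplication by `f` identifies `(Iₙ : f) / (Iₙ + (c))` with the right-hand term, because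
regularity forces `Ann f ⊆ Iₙ₋₁`. The last coordinate maps `Z` onto `(Iₙ₋₁ : Xₙ)`; since
`X₁, …, Xₙ₋₁` is regular, the Koszul complex is exact there, so a syzygy whose last coordinate lies
in `Iₙ₋₁` is trivial. If the last coordinate of `z ∈ Z` is `a f + b fₙ` modulo `Iₙ₋₁`, tangency
gives `f (a Xₙ + b c) ∈ Iₙ₋₁`, hence `a Xₙ + b c ∈ Iₙ₋₁` by regularity of `f`, and this is exactly
what is needed to correct `z` by elements of `f Rⁿ` and `R (f₁, …, fₙ)` to such a syzygy.
-/

section Subquotients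

variable {R V W : Type*} [Ring R] [AddCommGroup V] [Module R V] [AddCommGroup W] [Module R W]
  (φ : V →ₗ[R] W) {A D : Submodule R V} {B Q : Submodule R W}

/-- The map `A / (A ∩ D) → B / (B ∩ Q)` of subquotients induced by `φ`. -/
def subquotientMap (hA : A ≤ B.comap φ) (hD : ∀ a ∈ A, a ∈ D → φ a ∈ Q) :
    (A ⧸ D.comap A.subtype) →ₗ[R] (B ⧸ Q.comap B.subtype) :=
  Submodule.mapQ _ _ (φ.restrict hA) (show _ ≤ _ from fun a ha ↦ hD a a.2 ha)

variable {φ}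

lemma subquotientMap_mk_eq_zero_iff (hA : A ≤ B.comap φ) (hD : ∀ a ∈ A, a ∈ D → φ a ∈ Q)
    (a : A) : subquotientMap φ hA hD (Submodule.Quotient.mk a) = 0 ↔ φ a ∈ Q :=
  Submodule.Quotient.mk_eq_zero _

lemma subquotientMap_injective (hA : A ≤ B.comap φ) (hD : ∀ a ∈ A, a ∈ D → φ a ∈ Q)
    (h : ∀ a ∈ A, φ a ∈ Q → a ∈ D) : Function.Injective (subquotientMap φ hA hD) := by
  refine (injective_iff_map_eq_zero _).2 ((Submodule.Quotient.forall _).2 fun a ha ↦ ?_)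
  exact (Submodule.Quotient.mk_eq_zero _).2
    (h a a.2 ((subquotientMap_mk_eq_zero_iff hA hD a).1 ha))

lemma subquotientMap_surjective (hA : A ≤ B.comap φ) (hD : ∀ a ∈ A, a ∈ D → φ a ∈ Q)
    (h : B ≤ A.map φ) : Function.Surjective (subquotientMap φ hA hD) := by
  refine (Submodule.Quotient.forall _).2 fun b ↦ ?_
  obtain ⟨a, ha, hab⟩ := h b.2
  exact ⟨Submodule.Quotient.mk ⟨a, ha⟩, congrArg Submodule.Quotient.mk (Subtype.ext hab)⟩

variable (φ) in
/-- The isomorphism of subquotients induced by `φ` when it maps `A` onto `B` and `D` is the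
preimage of `Q` within `A`. -/
noncomputable def subquotientEquiv (hB : A.map φ = B) (hD : ∀ a ∈ A, a ∈ D ↔ φ a ∈ Q) :
    (A ⧸ D.comap A.subtype) ≃ₗ[R] (B ⧸ Q.comap B.subtype) :=
  LinearEquiv.ofBijective
    (subquotientMap φ (Submodule.map_le_iff_le_comap.1 hB.le) fun a ha ↦ (hD a ha).1)
    ⟨subquotientMap_injective _ _ fun a ha ↦ (hD a ha).2, subquotientMap_surjective _ _ hB.ge⟩

lemma exact_subquotientMap (hA : LinearMap.ker φ ≤ A) :
    Function.Exact
      (subquotientMap (D := D) (Q := D) LinearMap.id hA fun _ _ ↦ id)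
      (subquotientMap φ (Submodule.le_comap_map φ A) fun _ _ ↦ Submodule.mem_map_of_mem) := by
  refine (Submodule.Quotient.forall _).2 fun a ↦ ?_
  rw [subquotientMap_mk_eq_zero_iff]
  constructor
  · rintro ⟨d, hd, hda⟩
    have hker : (a : V) - d ∈ LinearMap.ker φ := by simp [hda]
    refine ⟨Submodule.Quotient.mk ⟨a - d, hker⟩, (Submodule.Quotient.eq _).2 ?_⟩
    simpa [Submodule.mem_comap] using hd
  · rintro ⟨z, hz⟩
    obtain ⟨z, rfl⟩ := Submodule.Quotient.mk_surjective _ z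
    have hzD : (z : V) - a ∈ D :=
      (Submodule.Quotient.eq (D.comap A.subtype) (x := ⟨z, hA z.2⟩) (y := a)).1 hz
    refine ⟨a - z, by simpa using neg_mem hzD, ?_⟩
    rw [map_sub, LinearMap.mem_ker.1 z.2, sub_zero]

lemma exists_exact_of_subquotientEquiv {M N : Type*} [AddCommGroup M] [Module R M]
    [AddCommGroup N] [Module R N] (hA : LinearMap.ker φ ≤ A)
    (e : (LinearMap.ker φ ⧸ D.comap (LinearMap.ker φ).subtype) ≃ₗ[R] M)
    (e' : N ≃ₗ[R] A.map φ ⧸ (D.map φ).comap (A.map φ).subtype) :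
    ∃ (ι : M →ₗ[R] A ⧸ D.comap A.subtype) (π : (A ⧸ D.comap A.subtype) →ₗ[R] N),
      Function.Injective ι ∧ Function.Exact ι π ∧ Function.Surjective π := by
  refine ⟨subquotientMap LinearMap.id hA (fun _ _ ↦ id) ∘ₗ e.symm.toLinearMap,
    e'.symm.toLinearMap ∘ₗ subquotientMap φ (Submodule.le_comap_map φ A)
      fun _ _ ↦ Submodule.mem_map_of_mem, ?_, ?_, ?_⟩
  · have hinj : Function.Injective
        (subquotientMap (D := D) (Q := D) LinearMap.id hA fun _ _ ↦ id) :=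
      subquotientMap_injective _ _ fun _ _ ↦ id
    exact hinj.comp e.symm.injective
  · rw [LinearEquiv.precomp_exact_iff_exact, LinearEquiv.postcomp_exact_iff_exact]
    exact exact_subquotientMap hA
  · exact e'.symm.surjective.comp (subquotientMap_surjective _ _ le_rfl)

end Subquotients

lemma nonempty_linearEquiv_prod_of_exact {k M E N : Type*} [Ring k] [AddCommGroup M] [Module k M]
    [AddCommGroup E] [Module k E] [AddCommGroup N] [Module k N] [Module.Projective k N]
    {ι : M →ₗ[k] E} {π : E →ₗ[k] N} (hι : Function.Injective ι) (hιπ : Function.Exact ι π)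
    (hπ : Function.Surjective π) : Nonempty (E ≃ₗ[k] N × M) := by
  obtain ⟨s, hs⟩ := π.exists_rightInverse_of_surjective (LinearMap.range_eq_top.2 hπ)
  exact ⟨(hιπ.splitSurjectiveEquiv hι ⟨s, hs⟩).1.trans (LinearEquiv.prodComm k M N)⟩

section Syzygies

variable {R : Type*} [CommRing R] {n : ℕ} (X : Fin n → R)

/-- The module `T` of trivial (Koszul) syzygies of `X`. -/
def trivialSyzygies : Submodule R (Fin n → R) :=
  Submodule.span R {v : Fin n → R | ∃ i j : Fin n, i < j ∧
    v = Pi.single i (X j) - Pi.single j (X i)}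

/-- The ideal `I_m` generated by the first `m` entries of `X`. -/
def headIdeal (m : ℕ) : Ideal R := Ideal.span (X '' {j : Fin n | (j : ℕ) < m})

lemma sumMul_apply (h : Fin n → R) : sumMul X h = ∑ i, h i * X i := rfl

lemma sumMul_single (i : Fin n) (r : R) : sumMul X (Pi.single i r) = r * X i :=
  Fintype.linearCombination_apply_single R X i r

lemma range_sumMul : LinearMap.range (sumMul X) = Ideal.span (Set.range X) :=
  Fintype.range_linearCombination R X

variable {X} in
lemma mem_headIdeal_iff {m : ℕ} {r : R} :
    r ∈ headIdeal X m ↔ ∃ a : Fin n → R, (∀ j : Fin n, m ≤ j → a j = 0) ∧ sumMul X a = r := by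
  constructor
  · intro hr
    obtain ⟨l, hl, rfl⟩ := (Finsupp.mem_span_image_iff_linearCombination R).1 hr
    refine ⟨l, fun j hj ↦ Finsupp.notMem_support_iff.1 fun h ↦ hj.not_gt (hl h), ?_⟩
    exact (Finsupp.sum_fintype l (fun j r ↦ r • X j) fun j ↦ zero_smul R (X j)).symm
  · rintro ⟨a, ha, rfl⟩
    rw [sumMul_apply]
    refine Ideal.sum_mem _ fun j _ ↦ ?_
    obtain hj | hj := lt_or_ge (j : ℕ) m
    · exact Ideal.mul_mem_left _ _ (Ideal.subset_span ⟨j, hj, rfl⟩)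
    · simp [ha j hj]

variable {X}

lemma sumMul_sub_apply_mul_mem_headIdeal {a : Fin n → R} {p : Fin n}
    (ha : ∀ j, p < j → a j = 0) : sumMul X a - a p * X p ∈ headIdeal X p := by
  rw [← sumMul_single, ← map_sub]
  refine mem_headIdeal_iff.2 ⟨_, fun j hj ↦ ?_, rfl⟩
  obtain rfl | hj := (Fin.le_iff_val_le_val.2 hj).eq_or_lt
  · simp
  · simp [ha j hj, hj.ne']

lemma apply_mul_mem_headIdeal {z : Fin n → R} {p : Fin n} (hz : sumMul X z = 0)
    (h0 : ∀ j, p < j → z j = 0) : z p * X p ∈ headIdeal X p := by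
  simpa [hz] using sumMul_sub_apply_mul_mem_headIdeal (X := X) h0

variable (X)

lemma trivialSyzygies_le_ker : trivialSyzygies X ≤ LinearMap.ker (sumMul X) := by
  refine Submodule.span_le.2 ?_
  rintro _ ⟨i, j, -, rfl⟩
  simp [sumMul_single, mul_comm]

lemma single_sub_single_mem_trivialSyzygies (i j : Fin n) :
    Pi.single i (X j) - Pi.single j (X i) ∈ trivialSyzygies X := by
  obtain hij | rfl | hij := lt_trichotomy i j
  · exact Submodule.subset_span ⟨i, j, hij, rfl⟩
  · simp
  · rw [← neg_sub]
    exact neg_mem (Submodule.subset_span ⟨j, i, hij, rfl⟩)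

lemma single_sumMul_sub_smul_mem_trivialSyzygies (p : Fin n) (a : Fin n → R) :
    Pi.single p (sumMul X a) - X p • a ∈ trivialSyzygies X := by
  have h : Pi.single p (sumMul X a) - X p • a =
      ∑ j, a j • (Pi.single p (X j) - Pi.single j (X p)) := by
    ext i
    simp [smul_sub, sumMul_apply, Finset.sum_apply, Pi.single_apply, mul_comm]
  rw [h]
  exact Submodule.sum_smul_mem _ _ fun j _ ↦ single_sub_single_mem_trivialSyzygies X p j

variable {X}

lemma exists_mem_trivialSyzygies_apply_eq {p : Fin n} {r : R} (hr : r ∈ headIdeal X p) :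
    ∃ t ∈ trivialSyzygies X, t p = r ∧ ∀ j, p < j → t j = 0 := by
  obtain ⟨a, ha, rfl⟩ := mem_headIdeal_iff.1 hr
  refine ⟨_, single_sumMul_sub_smul_mem_trivialSyzygies X p a, ?_, fun j hj ↦ ?_⟩
  · simp [ha p le_rfl]
  · simp [ha j hj.le, hj.ne']

lemma mem_trivialSyzygies_of_apply_mem_headIdeal {z : Fin n → R} {p : Fin n}
    (hz : sumMul X z = 0) (h0 : ∀ j, p < j → z j = 0) (hzp : z p ∈ headIdeal X p)
    (hp : ∀ w, sumMul X w = 0 → (∀ j, p ≤ j → w j = 0) → w ∈ trivialSyzygies X) :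
    z ∈ trivialSyzygies X := by
  obtain ⟨t, ht, htp, ht0⟩ := exists_mem_trivialSyzygies_apply_eq hzp
  have hsub : z - t ∈ trivialSyzygies X := by
    refine hp _ (by rw [map_sub, hz, trivialSyzygies_le_ker X ht, sub_zero]) fun j hj ↦ ?_
    obtain rfl | hj := hj.eq_or_lt
    · simp [htp]
    · simp [h0 j hj, ht0 j hj]
  simpa using add_mem hsub ht

lemma mem_trivialSyzygies_of_forall_le_apply_eq_zero {m : ℕ}
    (hreg : ∀ i : Fin n, i < m → ∀ r, r * X i ∈ headIdeal X i → r ∈ headIdeal X i)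
    {z : Fin n → R} (hz : sumMul X z = 0) (h0 : ∀ j : Fin n, m ≤ j → z j = 0) :
    z ∈ trivialSyzygies X := by
  induction m generalizing z with
  | zero => simp [show z = 0 from funext fun j ↦ h0 j j.val.zero_le]
  | succ m ih =>
    have hsupp {w : Fin n → R} (hw : sumMul X w = 0) (hw0 : ∀ j : Fin n, m ≤ j → w j = 0) :
        w ∈ trivialSyzygies X := ih (fun i hi ↦ hreg i (hi.trans m.lt_succ_self)) hw hw0
    obtain hm | hm := lt_or_ge m n
    · have hzm : ∀ j, ⟨m, hm⟩ < j → z j = 0 := fun j hj ↦ h0 j hj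
      exact mem_trivialSyzygies_of_apply_mem_headIdeal hz hzm
        (hreg ⟨m, hm⟩ m.lt_succ_self _ (apply_mul_mem_headIdeal hz hzm)) fun w ↦ hsupp
    · exact hsupp hz fun j hj ↦ absurd j.isLt (hm.trans hj).not_gt

end Syzygies

section Homology

variable {R : Type*} [CommRing R] {n : ℕ} (X : Fin n → R) (f : R) (fd : Fin n → R)

/-- The coordinates `h` of the one-forms `∑ hᵢ dzᵢ` on `V = {f = 0}` killed by contraction
with `X`. -/
noncomputable def contractionCycles : Submodule R (Fin n → R) :=
  Submodule.comap (sumMul X) (Ideal.span {f})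

/-- The relations `T + f Rⁿ + R (f₁, …, fₙ)` on `contractionCycles X f` that define
`H₁(Ω_V, X)`: contractions of two-forms, and the forms that vanish on `V`. -/
noncomputable def contractionBoundaries : Submodule R (Fin n → R) :=
  trivialSyzygies X ⊔ Submodule.map (LinearMap.lsmul R (Fin n → R) f) ⊤ ⊔ Submodule.span R {fd}

lemma ker_sumMul_le_contractionCycles : LinearMap.ker (sumMul X) ≤ contractionCycles X f :=
  Submodule.comap_mono bot_le

lemma map_lsmul_colon_eq_map_sumMul_contractionCycles :
    Submodule.map (LinearMap.lsmul R R f) ((Ideal.span (Set.range X)).colon (Ideal.span {f})) =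
      (contractionCycles X f).map (sumMul X) := by
  rw [contractionCycles, Submodule.map_comap_eq, range_sumMul]
  ext r
  simp only [Submodule.mem_map, Submodule.mem_colon_span_singleton, Submodule.mem_inf,
    Ideal.mem_span_singleton', LinearMap.lsmul_apply, smul_eq_mul]
  constructor
  · rintro ⟨g, hg, rfl⟩
    exact ⟨mul_comm g f ▸ hg, g, mul_comm g f⟩
  · rintro ⟨hr, g, rfl⟩
    exact ⟨g, hr, mul_comm f g⟩

variable {X f fd} in
lemma map_sumMul_contractionBoundaries {c : R} (htan : sumMul X fd = c * f) :
    (contractionBoundaries X f fd).map (sumMul X) =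
      Submodule.map (LinearMap.lsmul R R f) (Ideal.span (Set.range X) ⊔ Ideal.span {c}) := by
  have hT : (trivialSyzygies X).map (sumMul X) = ⊥ :=
    LinearMap.le_ker_iff_map.1 (trivialSyzygies_le_ker X)
  have hf : (Submodule.map (LinearMap.lsmul R (Fin n → R) f) ⊤).map (sumMul X) =
      Submodule.map (LinearMap.lsmul R R f) (Ideal.span (Set.range X)) := by
    rw [← range_sumMul, LinearMap.range_eq_map, ← Submodule.map_comp, ← Submodule.map_comp]
    congr 1
    ext; simp
  have hfd : (Submodule.span R {fd}).map (sumMul X) =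
      Submodule.map (LinearMap.lsmul R R f) (Ideal.span {c}) := by
    rw [Ideal.span, Submodule.map_span, Submodule.map_span, Set.image_singleton,
      Set.image_singleton, htan, mul_comm, LinearMap.lsmul_apply, smul_eq_mul]
  rw [contractionBoundaries, Submodule.map_sup, Submodule.map_sup, hT, hf, hfd, bot_sup_eq,
    Submodule.map_sup]

end Homology

section Last

variable {R : Type*} [CommRing R] {m : ℕ}

variable (R m) in
/-- The last coordinate `h ↦ h_{m+1}` on `R^{m+1}`. -/
abbrev lastCoord : (Fin (m + 1) → R) →ₗ[R] R := LinearMap.proj (Fin.last m)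

variable (X : Fin (m + 1) → R)

lemma trivialSyzygies_le_comap_lastCoord :
    trivialSyzygies X ≤ Submodule.comap (lastCoord R m) (headIdeal X m) := by
  refine Submodule.span_le.2 ?_
  rintro _ ⟨i, j, hij, rfl⟩
  have hi : i < Fin.last m := hij.trans_le j.le_last
  have hXi : X i ∈ headIdeal X m := Ideal.subset_span ⟨i, hi, rfl⟩
  obtain rfl | hj := eq_or_ne j (Fin.last m)
  · simpa [hi.ne'] using hXi
  · simp [hi.ne', hj.symm]

lemma map_lastCoord_ker_sumMul :
    (LinearMap.ker (sumMul X)).map (lastCoord R m) =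
      (headIdeal X m).colon (Ideal.span {X (Fin.last m)}) := by
  ext r
  rw [Submodule.mem_colon_span_singleton, smul_eq_mul]
  constructor
  · rintro ⟨z, hz, rfl⟩
    exact apply_mul_mem_headIdeal (p := Fin.last m) hz fun j hj ↦ absurd hj j.le_last.not_gt
  · intro hr
    obtain ⟨a, ha, har⟩ := mem_headIdeal_iff.1 hr
    refine ⟨Pi.single (Fin.last m) r - a, ?_, ?_⟩
    · simp [sumMul_single, har]
    · simp [ha (Fin.last m) le_rfl]

variable {X}

lemma mem_trivialSyzygies_of_apply_last_mem_headIdeal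
    (hreg : ∀ i : Fin (m + 1), i < m → ∀ r, r * X i ∈ headIdeal X i → r ∈ headIdeal X i)
    {z : Fin (m + 1) → R} (hz : sumMul X z = 0) (hlast : z (Fin.last m) ∈ headIdeal X m) :
    z ∈ trivialSyzygies X :=
  mem_trivialSyzygies_of_apply_mem_headIdeal hz
    (fun j hj ↦ absurd hj j.le_last.not_gt) hlast
    fun _ hw h0 ↦ mem_trivialSyzygies_of_forall_le_apply_eq_zero hreg hw fun j hj ↦ h0 j hj

section Boundaries

variable {f : R} {fd : Fin (m + 1) → R}

lemma contractionBoundaries_le_comap_lastCoord :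
    contractionBoundaries X f fd ≤
      Submodule.comap (lastCoord R m) (headIdeal X m ⊔ Ideal.span {f, fd (Fin.last m)}) := by
  refine sup_le (sup_le ?_ ?_) ?_
  · exact (trivialSyzygies_le_comap_lastCoord X).trans (Submodule.comap_mono le_sup_left)
  · rintro _ ⟨a, -, rfl⟩
    exact Ideal.mem_sup_right (Ideal.mul_mem_right _ _ (Ideal.subset_span (by simp)))
  · rw [Submodule.span_singleton_le_iff_mem]
    exact Ideal.mem_sup_right (Ideal.subset_span (by simp))

variable {c : R}

lemma mem_contractionBoundaries_of_apply_last_mem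
    (hregX : ∀ i : Fin (m + 1), i < m → ∀ r, r * X i ∈ headIdeal X i → r ∈ headIdeal X i)
    (hregf : ∀ r, r * f ∈ headIdeal X m → r ∈ headIdeal X m) (htan : sumMul X fd = c * f)
    {z : Fin (m + 1) → R} (hz : sumMul X z = 0)
    (hlast : z (Fin.last m) ∈ headIdeal X m ⊔ Ideal.span {f, fd (Fin.last m)}) :
    z ∈ contractionBoundaries X f fd := by
  obtain ⟨t, ht, w, hw, hsum⟩ := Submodule.mem_sup.1 hlast
  obtain ⟨a, b, rfl⟩ := Ideal.mem_span_pair.1 hw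
  have hcoeff : a * X (Fin.last m) + b * c ∈ headIdeal X m := by
    have hzX : z (Fin.last m) * X (Fin.last m) ∈ headIdeal X m :=
      apply_mul_mem_headIdeal hz (p := Fin.last m) fun j hj ↦ absurd hj j.le_last.not_gt
    have hfdX : c * f - fd (Fin.last m) * X (Fin.last m) ∈ headIdeal X m := htan ▸
      sumMul_sub_apply_mul_mem_headIdeal (p := Fin.last m) fun j hj ↦ absurd hj j.le_last.not_gt
    refine hregf _ ?_
    convert add_mem (sub_mem hzX (Ideal.mul_mem_right (X (Fin.last m)) _ ht))
      (Ideal.mul_mem_left _ b hfdX) using 1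
    rw [← hsum]
    ring
  obtain ⟨a', ha', hsum'⟩ := mem_headIdeal_iff.1 hcoeff
  -- Subtracting `a'` gives the correction of `z` by `f Rⁿ` the contraction `-b c f`.
  have htriv : z - f • (Pi.single (Fin.last m) a - a') - b • fd ∈ trivialSyzygies X := by
    refine mem_trivialSyzygies_of_apply_last_mem_headIdeal hregX ?_ ?_
    · simp only [map_sub, map_smul, hz, htan, sumMul_single, hsum', smul_eq_mul]
      ring
    · convert ht using 1
      simp only [Pi.sub_apply, Pi.smul_apply, Pi.single_eq_same, ha' (Fin.last m) le_rfl,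
        smul_eq_mul, ← hsum]
      ring
  have hf : f • (Pi.single (Fin.last m) a - a') ∈
      Submodule.map (LinearMap.lsmul R (Fin (m + 1) → R) f) ⊤ := ⟨_, trivial, rfl⟩
  have hfd : b • fd ∈ Submodule.span R {fd} :=
    Submodule.smul_mem _ b (Submodule.mem_span_singleton_self fd)
  have hsup := Submodule.add_mem_sup (Submodule.add_mem_sup htriv hf) hfd
  rwa [sub_right_comm, sub_add_cancel, sub_add_cancel] at hsup

end Boundaries

end Last

theorem h1_omega_V_iso_general {R : Type*} [CommRing R] {m : ℕ} {X : Fin (m + 1) → R} {f : R}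
    {fd : Fin (m + 1) → R} {c : R}
    (hregX : ∀ i : Fin (m + 1), i < m → ∀ r, r * X i ∈ headIdeal X i → r ∈ headIdeal X i)
    (hregf : ∀ r, r * f ∈ headIdeal X m → r ∈ headIdeal X m)
    (htan : ∑ i, X i * fd i = c * f) :
    let J₁ := (Ideal.span (Set.range X)).colon (Ideal.span {f})
    let J₂ := (headIdeal X m).colon (Ideal.span {X (Fin.last m)})
    ∃ (ι : (J₂ ⧸ Submodule.comap J₂.subtype
            (J₂ ⊓ (headIdeal X m ⊔ Ideal.span {f, fd (Fin.last m)}))) →ₗ[R]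
          contractionCycles X f ⧸
            (contractionBoundaries X f fd).comap (contractionCycles X f).subtype)
      (π : (contractionCycles X f ⧸
            (contractionBoundaries X f fd).comap (contractionCycles X f).subtype) →ₗ[R]
          J₁ ⧸ Submodule.comap J₁.subtype (Ideal.span (Set.range X) ⊔ Ideal.span {c})),
      Function.Injective ι ∧ Function.Exact ι π ∧ Function.Surjective π := by
  intro J₁ J₂
  have htan' : sumMul X fd = c * f := by simpa only [sumMul_apply, mul_comm] using htan
  have hann : LinearMap.ker (LinearMap.lsmul R R f) ≤ Ideal.span (Set.range X) := fun r hr ↦ by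
    have hrf : r * f = 0 := (mul_comm r f).trans hr
    exact Ideal.span_mono (Set.image_subset_range _ _) (hregf r (hrf ▸ zero_mem _))
  have hmap := map_lastCoord_ker_sumMul X
  have hker (z) (hz : z ∈ LinearMap.ker (sumMul X)) : z ∈ contractionBoundaries X f fd ↔
      lastCoord R m z ∈ J₂ ⊓ (headIdeal X m ⊔ Ideal.span {f, fd (Fin.last m)}) :=
    ⟨fun h ↦ ⟨hmap.le ⟨z, hz, rfl⟩, contractionBoundaries_le_comap_lastCoord h⟩,
      fun h ↦ mem_contractionBoundaries_of_apply_last_mem hregX hregf htan' hz h.2⟩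
  have hcolon (g) (_ : g ∈ J₁) : g ∈ Ideal.span (Set.range X) ⊔ Ideal.span {c} ↔
      LinearMap.lsmul R R f g ∈ (contractionBoundaries X f fd).map (sumMul X) := by
    rw [map_sumMul_contractionBoundaries htan', ← Submodule.mem_comap, Submodule.comap_map_eq,
      sup_eq_left.2 (hann.trans le_sup_left)]
  exact exists_exact_of_subquotientEquiv (ker_sumMul_le_contractionCycles X f)
    (subquotientEquiv (lastCoord R m) hmap hker)
    (subquotientEquiv (LinearMap.lsmul R R f)
      (map_lsmul_colon_eq_map_sumMul_contractionCycles X f) hcolon)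

/-- `H_1(Ω^*_{V,0}, X)`, i.e.
`{h ∈ Rⁿ : ∑ hᵢXᵢ ∈ fR}/(T + f·Rⁿ + R·(f_1,…,f_n))`, is isomorphic as a `k`-vector
space to `(Iₙ : f)/(Iₙ + (c)) ⊕ (I_{n−1} : Xₙ)/((I_{n−1} : Xₙ) ∩ (I_{n−1} + (f, fₙ)))`. -/
theorem h1_omega_V_iso
    (k : Type*) [Field k] {R : Type*} [CommRing R] [Algebra k R]
    (n : ℕ) (hn : 2 ≤ n) (X : Fin n → R) (f : R) (fd : Fin n → R) (c : R)
    (hregX : ∀ i : Fin n, (i : ℕ) < n - 1 → ∀ r : R,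
      r * X i ∈ Ideal.span (X '' {j : Fin n | (j : ℕ) < (i : ℕ)}) →
      r ∈ Ideal.span (X '' {j : Fin n | (j : ℕ) < (i : ℕ)}))
    (hregf : ∀ r : R, r * f ∈ Ideal.span (X '' {j : Fin n | (j : ℕ) < n - 1}) →
      r ∈ Ideal.span (X '' {j : Fin n | (j : ℕ) < n - 1}))
    (htan : ∑ i, X i * fd i = c * f) :
    Nonempty (
      (↥(Submodule.comap (sumMul X) (Ideal.span {f})) ⧸
        Submodule.comap (Submodule.comap (sumMul X) (Ideal.span {f})).subtype
          (Submodule.span R {v : Fin n → R | ∃ i j : Fin n, i < j ∧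
              v = Pi.single i (X j) - Pi.single j (X i)} ⊔
            Submodule.map (LinearMap.lsmul R (Fin n → R) f) ⊤ ⊔
            Submodule.span R {fd}))
      ≃ₗ[k]
      ((↥((Ideal.span (Set.range X)).colon (Ideal.span {f})) ⧸
          Submodule.comap ((Ideal.span (Set.range X)).colon (Ideal.span {f})).subtype
            (Ideal.span (Set.range X) ⊔ Ideal.span {c})) ×
        (↥((Ideal.span (X '' {j : Fin n | (j : ℕ) < n - 1})).colon
            (Ideal.span {X ⟨n - 1, Nat.sub_lt (Nat.lt_of_lt_of_le Nat.zero_lt_two hn)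
              Nat.one_pos⟩})) ⧸
          Submodule.comap
            ((Ideal.span (X '' {j : Fin n | (j : ℕ) < n - 1})).colon
              (Ideal.span {X ⟨n - 1, Nat.sub_lt (Nat.lt_of_lt_of_le Nat.zero_lt_two hn)
                Nat.one_pos⟩})).subtype
            ((Ideal.span (X '' {j : Fin n | (j : ℕ) < n - 1})).colon
                (Ideal.span {X ⟨n - 1, Nat.sub_lt (Nat.lt_of_lt_of_le Nat.zero_lt_two hn)
                  Nat.one_pos⟩}) ⊓
              (Ideal.span (X '' {j : Fin n | (j : ℕ) < n - 1}) ⊔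
                Ideal.span ({f, fd ⟨n - 1, Nat.sub_lt (Nat.lt_of_lt_of_le Nat.zero_lt_two hn)
                  Nat.one_pos⟩} : Set R)))))) := by
  obtain _ | m := n
  · omega
  · obtain ⟨ι, π, hι, hιπ, hπ⟩ := h1_omega_V_iso_general hregX hregf htan
    exact nonempty_linearEquiv_prod_of_exact (ι := ι.restrictScalars k) (π := π.restrictScalars k)
      hι hιπ hπ
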